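/- Let (X, μ) be a measure space with 0 < μ(X) < ∞, let l be a positive integer, and let F be a finite-dimensional real subspace of the space of functions from X to ℝ^l whose members are all measurable and bounded. Suppose C ≥ 0 is a constant such that every s ∈ F satisfies μ(X) · (sup_{x ∈ X} ‖s(x)‖)² ≤ C · ∫_X ‖s(x)‖² dμ(x). Then dim_ℝ F ≤ l · C. -/

import Mathlib

open MeasureTheory

lemma exists_onb_of_core {V : Type*} [AddCommGroup V] [Module ℝ V] [FiniteDimensional ℝ V]
    (c : InnerProductSpace.Core ℝ V) :
    ∃ b : Fin (Module.finrank ℝ V) → V, ∀ i j, c.inner (b i) (b j) = if i = j then 1 else 0 := by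
  letI : NormedAddCommGroup V := c.toNormedAddCommGroup
  letI : InnerProductSpace ℝ V := InnerProductSpace.ofCore c.toCore
  exact ⟨stdOrthonormalBasis ℝ V, fun i j =>
    orthonormal_iff_ite.1 (stdOrthonormalBasis ℝ V).orthonormal i j⟩

/-- Measure-theoretic content of Lemma 2.4 (Li's lemma, following Bérard): if `F` is a
finite-dimensional space of bounded measurable `ℝ^l`-valued functions on a finite measure
space of positive total mass, and every `s ∈ F` satisfies
`μ(X) · (sup_x ‖s(x)‖)² ≤ C · ∫ ‖s‖² dμ`, then `dim F ≤ l · C`. -/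
theorem finrank_le_of_sup_sq_le_integral_sq
    (X : Type*) [MeasurableSpace X] (μ : Measure X)
    (hpos : 0 < μ Set.univ) (hfin : μ Set.univ < ⊤)
    (l : ℕ) (hl : 0 < l)
    (F : Subspace ℝ (X → EuclideanSpace ℝ (Fin l)))
    [FiniteDimensional ℝ F]
    (hmeas : ∀ s ∈ F, Measurable s)
    (hbdd : ∀ s ∈ F, ∃ M : ℝ, ∀ x : X, ‖s x‖ ≤ M)
    (C : ℝ) (hC : 0 ≤ C)
    (hineq : ∀ s ∈ F,
      (μ Set.univ).toReal * (⨆ x : X, ‖s x‖) ^ 2 ≤ C * ∫ x, ‖s x‖ ^ 2 ∂μ) :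
    (Module.finrank ℝ F : ℝ) ≤ l * C := by
  have : IsFiniteMeasure μ := ⟨hfin⟩
  have hV : 0 < (μ Set.univ).toReal := ENNReal.toReal_pos hpos.ne' hfin.ne
  have hint : ∀ s ∈ F, ∀ t ∈ F, Integrable (fun x => inner ℝ (s x) (t x)) μ := by
    intro s hs t ht
    obtain ⟨M, hM⟩ := hbdd s hs
    obtain ⟨N, hN⟩ := hbdd t ht
    refine Integrable.of_bound (C := M * N)
      ((hmeas s hs).inner (hmeas t ht)).aestronglyMeasurable (Filter.Eventually.of_forall ?_)
    intro x
    exact (norm_inner_le_norm _ _).trans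
      (mul_le_mul (hM x) (hN x) (norm_nonneg _) ((norm_nonneg _).trans (hM x)))
  have hle : ∀ s ∈ F, ∀ x, ‖s x‖ ≤ ⨆ x : X, ‖s x‖ := by
    intro s hs x
    obtain ⟨M, hM⟩ := hbdd s hs
    exact le_ciSup (f := fun x => ‖s x‖) ⟨M, by rintro _ ⟨y, rfl⟩; exact hM y⟩ x
  have hpt : ∀ s ∈ F, ∀ x, (μ Set.univ).toReal * ‖s x‖ ^ 2 ≤ C * ∫ x, inner ℝ (s x) (s x) ∂μ := by
    intro s hs x
    simp only [real_inner_self_eq_norm_sq]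
    refine le_trans ?_ (hineq s hs)
    have := hle s hs x
    gcongr
  let c : InnerProductSpace.Core ℝ F :=
    { inner := fun f g => ∫ x, inner ℝ (f.1 x) (g.1 x) ∂μ
      conj_inner_symm := by
        intro f g
        simp only [conj_trivial]
        congr 1
        ext x
        exact real_inner_comm _ _
      re_inner_nonneg := by
        intro f
        exact integral_nonneg (fun x => real_inner_self_nonneg)
      add_left := by
        intro f g k
        simp only [Submodule.coe_add, Pi.add_apply, inner_add_left]
        exact integral_add (hint _ f.2 _ k.2) (hint _ g.2 _ k.2)
      smul_left := by
        intro f g r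
        simp only [Submodule.coe_smul, Pi.smul_apply, real_inner_smul_left, conj_trivial]
        exact integral_const_mul _ _
      definite := by
        intro f hf
        ext1
        funext x
        have h := hpt f.1 f.2 x
        have hf' : ∫ x, inner ℝ (f.1 x) (f.1 x) ∂μ = 0 := hf
        rw [hf', mul_zero] at h
        have h2 : ‖f.1 x‖ ^ 2 ≤ 0 := by
          by_contra hh
          push Not at hh
          exact absurd h (not_le.2 (mul_pos hV hh))
        have h3 : ‖f.1 x‖ = 0 := by
          have := le_antisymm h2 (sq_nonneg _)
          exact pow_eq_zero_iff (two_ne_zero) |>.1 this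
        simpa using h3 }
  obtain ⟨b, hb⟩ := exists_onb_of_core c
  have hb' : ∀ i j, ∫ x, inner ℝ ((b i).1 x) ((b j).1 x) ∂μ = if i = j then 1 else 0 := hb
  -- pointwise bound for each coordinate
  have hK : ∀ x j, (μ Set.univ).toReal * ∑ i, ((b i).1 x j) ^ 2 ≤ C := by
    intro x j
    set K := ∑ i, ((b i).1 x j) ^ 2 with hKdef
    have hK0 : 0 ≤ K := Finset.sum_nonneg fun i _ => sq_nonneg _
    let s : F := ∑ i, ((b i).1 x j) • b i
    have hsv : ∀ y, s.1 y = ∑ i, ((b i).1 x j) • (b i).1 y := by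
      intro y
      simp [s]
    have hsx : s.1 x j = K := by
      rw [hsv, hKdef]
      simp [pow_two]
    have hsn : ∫ y, inner ℝ (s.1 y) (s.1 y) ∂μ = K := by
      simp only [hsv, sum_inner, inner_sum, real_inner_smul_left, real_inner_smul_right]
      rw [integral_finsetSum _ (fun i _ => integrable_finsetSum _ (fun k _ =>
        ((hint _ (b _).2 _ (b _).2).const_mul _).const_mul _))]
      rw [hKdef]
      refine Finset.sum_congr rfl fun i _ => ?_
      rw [integral_finsetSum _ (fun k _ =>
        ((hint _ (b _).2 _ (b _).2).const_mul _).const_mul _)]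
      simp only [integral_const_mul, hb']
      simp [pow_two]
    have h1 := hpt s.1 s.2 x
    rw [hsn] at h1
    have h2 : K ≤ ‖s.1 x‖ := by
      rw [← hsx]
      exact (le_abs_self _).trans (PiLp.norm_apply_le (s.1 x) j)
    have h3 : (μ Set.univ).toReal * K ^ 2 ≤ C * K := le_trans (by gcongr) h1
    rcases hK0.eq_or_lt with h0 | h0
    · rw [← h0, mul_zero]; exact hC
    · refine le_of_mul_le_mul_right ?_ h0
      linarith [h3, show (μ Set.univ).toReal * K * K = (μ Set.univ).toReal * K ^ 2 by ring]
  have hsum : ∀ x, (μ Set.univ).toReal * ∑ i, inner ℝ ((b i).1 x) ((b i).1 x) ≤ l * C := by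
    intro x
    have : ∑ i, inner ℝ ((b i).1 x) ((b i).1 x) = ∑ j, ∑ i, ((b i).1 x j) ^ 2 := by
      rw [Finset.sum_comm]
      refine Finset.sum_congr rfl fun i _ => ?_
      rw [real_inner_self_eq_norm_sq, EuclideanSpace.real_norm_sq_eq]
    rw [this, Finset.mul_sum]
    refine (Finset.sum_le_sum fun j _ => hK x j).trans ?_
    simp
  have hI : ∫ x, (μ Set.univ).toReal * ∑ i, inner ℝ ((b i).1 x) ((b i).1 x) ∂μ
      ≤ ∫ _x, (l * C : ℝ) ∂μ :=
    integral_mono ((integrable_finsetSum _ fun i _ => hint _ (b i).2 _ (b i).2).const_mul _)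
      (integrable_const _) hsum
  rw [integral_const_mul, integral_finsetSum _ fun i _ => hint _ (b i).2 _ (b i).2] at hI
  simp only [hb', integral_const, Measure.real, smul_eq_mul] at hI
  refine le_of_mul_le_mul_left ?_ hV
  simpa using hI
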